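/- Let P be a finite set of at least 23 points in the plane such that no two points of P have the same x-coordinate, and let H be the closed vertical strip bounded by the vertical lines through the leftmost point l of P and the rightmost point r of P. Then there exists a noncrossing covering path for P with |P| − 2 edges that is contained in H and whose endpoints are l and r. -/

import Mathlib

/-!
Joining the points `p 0, …, p N` of `P` in order of abscissa gives an `x`-monotone path with
`|P| - 1` edges. It suffices to save one edge on one block of consecutive points, by a path that
stays strictly inside the strip of the block except at its two ends; such paths concatenate with
the monotone path on either side (`HasPath.glue`). Twelve consecutive points always contain a
block that allows this (`not_stuck`), so the theorem already holds for `|P| ≥ 12`.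

Suppose twelve points allow no saving. Signs below are those of `turn a b c`, positive when the
middle point lies below the segment joining the outer two.

* If four consecutive points form a cup or a cap, the lines through the first two and the last
  two meet above the middle gap, and two edges suffice (`save_four`). So the consecutive turns
  alternate and the points form a zigzag, with an upper row of every second point and a lower row.
* Visiting `p 0, p 2, p 1, p 3, …` instead of the natural order creates new cups and caps
  (`save_swap`). Hence in any four consecutive points, away from the ends, the two upper points
  lie above the line of the two lower ones, and the two lower points below the line of the
  upper ones.
* If four consecutive points of one row form a cup or a cap, cover them by two edges, and pick up
  the points of the other row by going back and forth (`save_row`). Hence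
  `cᵢ = turn (p i) (p (i + 2)) (p (i + 4))` is nonzero for `i = 2, 3, 4, 5`, and `c₂, c₄`
  have opposite signs, as do `c₃, c₅`.
* So `c₃` agrees in sign with `c₂` or with `c₄`: both rows turn the same way at neighbouring
  places. Then one can follow one row, pass through a point along a nearly vertical edge that
  ends on a line of the other row, return along that line, and save an edge (`save_steep`).

All statements are used together with their images under reflection in both axes.
-/

/-- The `i`-th edge of the polygonal path with vertex sequence `v`:
the closed segment from `v i` to `v (i+1)`. -/
def pathEdge {m : ℕ} (v : Fin (m + 1) → ℝ × ℝ) (i : Fin m) : Set (ℝ × ℝ) :=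
  segment ℝ (v i.castSucc) (v i.succ)

/-- A polygonal path is noncrossing if its edges pairwise intersect only in shared
path vertices: two consecutive edges meet exactly at their common endpoint, and two
nonconsecutive edges are disjoint. -/
def IsNoncrossingPath {m : ℕ} (v : Fin (m + 1) → ℝ × ℝ) : Prop :=
  (∀ i j : Fin m, (i : ℕ) + 1 = (j : ℕ) →
      pathEdge v i ∩ pathEdge v j = {v i.succ}) ∧
  (∀ i j : Fin m, (i : ℕ) + 1 < (j : ℕ) →
      pathEdge v i ∩ pathEdge v j = ∅)

/-! ### Orientation of triples and separation of segments -/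

/-- Twice the signed area of the triangle `a b c`: for `a.1 < b.1 < c.1` it is positive when
`b` lies below the segment `a c` and negative when `b` lies above it. -/
def turn (a b c : ℝ × ℝ) : ℝ :=
  (b.1 - a.1) * (c.2 - a.2) - (b.2 - a.2) * (c.1 - a.1)

/-- `f` is an affine functional on the plane. -/
def IsAff (f : ℝ × ℝ → ℝ) : Prop :=
  ∃ α β γ : ℝ, ∀ p, f p = α * p.1 + β * p.2 + γ

lemma isAff_turn (a b : ℝ × ℝ) : IsAff (turn a b) :=
  ⟨-(b.2 - a.2), b.1 - a.1, (b.2 - a.2) * a.1 - (b.1 - a.1) * a.2, fun p => by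
    unfold turn; ring⟩

lemma isAff_fst : IsAff Prod.fst := ⟨1, 0, 0, fun p => by ring⟩

lemma IsAff.sub_const {f : ℝ × ℝ → ℝ} (hf : IsAff f) (c : ℝ) : IsAff (fun p => f p - c) := by
  obtain ⟨α, β, γ, h⟩ := hf
  exact ⟨α, β, γ - c, fun p => by simp only [h]; ring⟩

lemma IsAff.mul_const {f : ℝ × ℝ → ℝ} (hf : IsAff f) (c : ℝ) : IsAff (fun p => c * f p) := by
  obtain ⟨α, β, γ, h⟩ := hf
  exact ⟨c * α, c * β, c * γ, fun p => by simp only [h]; ring⟩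

lemma IsAff.exists_combo {f : ℝ × ℝ → ℝ} (hf : IsAff f) {A B p : ℝ × ℝ}
    (hp : p ∈ segment ℝ A B) :
    ∃ s t : ℝ, 0 ≤ s ∧ 0 ≤ t ∧ s + t = 1 ∧ s • A + t • B = p ∧ f p = s * f A + t * f B := by
  obtain ⟨s, t, hs, ht, hst, rfl⟩ := hp
  obtain ⟨α, β, γ, h⟩ := hf
  refine ⟨s, t, hs, ht, hst, rfl, ?_⟩
  simp only [h, Prod.fst_add, Prod.snd_add, Prod.smul_fst, Prod.smul_snd, smul_eq_mul]
  linear_combination (-γ) * hst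

/-- On a segment with `f A ≤ 0` and `f B < 0`, the functional is nonpositive and vanishes at
most at `A`. -/
lemma IsAff.nonpos_of_mem {f : ℝ × ℝ → ℝ} (hf : IsAff f) {A B p : ℝ × ℝ}
    (hp : p ∈ segment ℝ A B) (hA : f A ≤ 0) (hB : f B < 0) : f p < 0 ∨ (p = A ∧ f A = 0) := by
  obtain ⟨s, t, hs, ht, hst, hp, hfp⟩ := hf.exists_combo hp
  rcases ht.lt_or_eq with ht' | ht'
  · left; rw [hfp]; nlinarith [mul_nonneg hs (neg_nonneg.2 hA), mul_pos ht' (neg_pos.2 hB)]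
  · subst ht'
    obtain rfl : s = 1 := by linarith
    simp only [one_smul, zero_smul, add_zero] at hp
    subst hp
    rcases hA.lt_or_eq with h | h
    · exact Or.inl h
    · exact Or.inr ⟨rfl, h⟩

lemma IsAff.nonneg_of_mem {f : ℝ × ℝ → ℝ} (hf : IsAff f) {A B p : ℝ × ℝ}
    (hp : p ∈ segment ℝ A B) (hA : 0 ≤ f A) (hB : 0 ≤ f B) : 0 ≤ f p := by
  obtain ⟨s, t, hs, ht, -, -, hfp⟩ := hf.exists_combo hp
  rw [hfp]; positivity

/-- Separation, strict on one side. -/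
lemma disj_strict {f : ℝ × ℝ → ℝ} (hf : IsAff f) {A B C D : ℝ × ℝ}
    (hA : 0 ≤ f A) (hB : 0 ≤ f B) (hC : f C < 0) (hD : f D < 0) :
    Disjoint (segment ℝ A B) (segment ℝ C D) := by
  rw [Set.disjoint_left]
  intro p h1 h2
  have := hf.nonneg_of_mem h1 hA hB
  rcases hf.nonpos_of_mem h2 hC.le hD with h | ⟨-, h⟩ <;> linarith

/-- Separation when each segment may touch the separating line, but in different points. -/
lemma disj_touch {f : ℝ × ℝ → ℝ} (hf : IsAff f) {A B C D : ℝ × ℝ}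
    (hA : 0 ≤ f A) (hB : 0 < f B) (hC : f C ≤ 0) (hD : f D < 0) (hAC : A ≠ C) :
    Disjoint (segment ℝ A B) (segment ℝ C D) := by
  rw [Set.disjoint_left]
  intro p h1 h2
  have h3 := (hf.mul_const (-1)).nonpos_of_mem h1 (by simpa using hA) (by simpa using hB)
  have h4 := hf.nonpos_of_mem h2 hC hD
  rcases h3 with h3 | ⟨h3, h3'⟩ <;> rcases h4 with h4 | ⟨h4, h4'⟩
  · linarith
  · subst h4; linarith
  · subst h3; linarith
  · exact hAC (h3.symm.trans h4)

/-- Two segments sharing the endpoint `B` meet only there if a line through `B` has the first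
strictly on one side (apart from `B`) and the second weakly on the other. -/
lemma meet_aff {f : ℝ × ℝ → ℝ} (hf : IsAff f) {A B C : ℝ × ℝ}
    (hA : f A < 0) (hB : f B = 0) (hC : 0 ≤ f C) :
    segment ℝ A B ∩ segment ℝ B C ⊆ {B} := by
  rintro p ⟨h1, h2⟩
  rw [segment_symm] at h1
  have := hf.nonneg_of_mem h2 hB.ge hC
  rcases hf.nonpos_of_mem h1 hB.le hA with h | ⟨h, -⟩
  · linarith
  · exact h

lemma disj_x {A B C D : ℝ × ℝ} (h1 : A.1 < C.1) (h2 : B.1 < C.1) (h3 : A.1 < D.1)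
    (h4 : B.1 < D.1) : Disjoint (segment ℝ A B) (segment ℝ C D) := by
  have h := lt_min (max_lt h1 h2) (max_lt h3 h4)
  refine (disj_strict (isAff_fst.sub_const (min C.1 D.1)) ?_ ?_ ?_ ?_).symm <;> simp <;> aesop

lemma meet_x {A B C : ℝ × ℝ} (h1 : A.1 < B.1) (h2 : B.1 < C.1) :
    segment ℝ A B ∩ segment ℝ B C ⊆ {B} :=
  meet_aff (isAff_fst.sub_const B.1) (by linarith) (by simp) (by linarith)

lemma mem_seg_of_turn {a b w : ℝ × ℝ} (h : turn a b w = 0) (h1 : a.1 < b.1) (h2 : b.1 ≤ w.1) :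
    b ∈ segment ℝ a w := by
  have hw : 0 < w.1 - a.1 := by linarith
  refine ⟨(w.1 - b.1) / (w.1 - a.1), (b.1 - a.1) / (w.1 - a.1), ?_, ?_, ?_, ?_⟩
  · exact div_nonneg (by linarith) hw.le
  · exact div_nonneg (by linarith) hw.le
  · field_simp; ring
  · unfold turn at h
    ext
    · simp only [Prod.fst_add, Prod.smul_fst, smul_eq_mul]
      field_simp; ring
    · simp only [Prod.snd_add, Prod.smul_snd, smul_eq_mul]
      field_simp
      linear_combination h

lemma mem_seg_of_turn' {a b w : ℝ × ℝ} (h : turn w a b = 0) (h1 : w.1 ≤ a.1) (h2 : a.1 < b.1) :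
    a ∈ segment ℝ w b := by
  rcases h1.lt_or_eq with h1 | h1
  · exact mem_seg_of_turn h h1 h2.le
  · have : w = a := by
      ext
      · exact h1
      · unfold turn at h
        rw [h1] at h
        have : (a.2 - w.2) * (b.1 - a.1) = 0 := by linarith
        rcases mul_eq_zero.1 this with h | h <;> linarith
    rw [this]; exact left_mem_segment _ _ _

/-- If `w` lies on the line `a b`, then `turn a c w` is a multiple of `turn a c b`. -/
lemma turn_scale {a b w : ℝ × ℝ} (c : ℝ × ℝ) (h : turn a b w = 0) :
    turn a c w * (b.1 - a.1) = turn a c b * (w.1 - a.1) := by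
  unfold turn at *
  linear_combination (c.1 - a.1) * h

/-- Four points forming a (weak) cup: the lines through the first two and through the last
two meet above the gap in between. -/
lemma exists_apex_cup {a b c d : ℝ × ℝ} (hab : a.1 < b.1) (hbc : b.1 < c.1) (hcd : c.1 < d.1)
    (h1 : 0 ≤ turn a b c) (h2 : 0 ≤ turn b c d) :
    ∃ w : ℝ × ℝ, b.1 ≤ w.1 ∧ w.1 ≤ c.1 ∧ turn a b w = 0 ∧ turn w c d = 0 := by
  -- `F` and `G` are the vertical gaps between the two lines above `b` and above `c`
  obtain ⟨s, hs⟩ : ∃ s, b.2 - a.2 = s * (b.1 - a.1) :=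
    ⟨(b.2 - a.2) / (b.1 - a.1), by rw [div_mul_cancel₀]; linarith⟩
  obtain ⟨t, ht⟩ : ∃ t, d.2 - c.2 = t * (d.1 - c.1) :=
    ⟨(d.2 - c.2) / (d.1 - c.1), by rw [div_mul_cancel₀]; linarith⟩
  have hF : 0 ≤ b.2 - c.2 + t * (c.1 - b.1) := by
    have : turn b c d = (d.1 - c.1) * (b.2 - c.2 + t * (c.1 - b.1)) := by
      unfold turn; linear_combination (c.1 - b.1) * ht
    rw [this] at h2
    exact nonneg_of_mul_nonneg_right h2 (by linarith)
  have hG : 0 ≤ c.2 - b.2 - s * (c.1 - b.1) := by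
    have : turn a b c = (b.1 - a.1) * (c.2 - b.2 - s * (c.1 - b.1)) := by
      unfold turn; linear_combination (b.1 - c.1) * hs
    rw [this] at h1
    exact nonneg_of_mul_nonneg_right h1 (by linarith)
  set F := b.2 - c.2 + t * (c.1 - b.1) with hFd
  set G := c.2 - b.2 - s * (c.1 - b.1) with hGd
  have key : ∃ r, 0 ≤ r ∧ r ≤ 1 ∧ r * (F + G) = F := by
    rcases (add_nonneg hF hG).lt_or_eq with h | h
    · exact ⟨F / (F + G), by positivity, by rw [div_le_one h]; linarith,
        div_mul_cancel₀ _ h.ne'⟩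
    · exact ⟨0, le_rfl, zero_le_one, by linarith⟩
  obtain ⟨r, hr0, hr1, hr⟩ := key
  refine ⟨(b.1 + r * (c.1 - b.1), b.2 + s * (r * (c.1 - b.1))), ?_, ?_, ?_, ?_⟩
  · simp only; nlinarith
  · simp only; nlinarith
  · unfold turn; simp only
    linear_combination (-(b.1 + r * (c.1 - b.1) - b.1)) * hs
  · unfold turn; simp only
    have : d.2 = c.2 + t * (d.1 - c.1) := by linarith
    rw [this]
    rw [hFd, hGd] at hr
    linear_combination -(d.1 - c.1) * hr

/-! ### Reflections -/

/-- Reflection in the `x`-axis. -/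
def flipY (p : ℝ × ℝ) : ℝ × ℝ := (p.1, -p.2)

/-- Reflection in the `y`-axis. -/
def flipX (p : ℝ × ℝ) : ℝ × ℝ := (-p.1, p.2)

@[simp] lemma flipY_fst (p : ℝ × ℝ) : (flipY p).1 = p.1 := rfl
@[simp] lemma flipX_fst (p : ℝ × ℝ) : (flipX p).1 = -p.1 := rfl
@[simp] lemma flipY_flipY (p : ℝ × ℝ) : flipY (flipY p) = p := by simp [flipY]
@[simp] lemma flipX_flipX (p : ℝ × ℝ) : flipX (flipX p) = p := by simp [flipX]

@[simp] lemma turn_flipY (a b c : ℝ × ℝ) :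
    turn (flipY a) (flipY b) (flipY c) = -turn a b c := by
  simp only [turn, flipY]; ring

@[simp] lemma turn_flipX (a b c : ℝ × ℝ) :
    turn (flipX a) (flipX b) (flipX c) = turn c b a := by
  simp only [turn, flipX]; ring

lemma exists_apex {a b c d : ℝ × ℝ} (hab : a.1 < b.1) (hbc : b.1 < c.1) (hcd : c.1 < d.1)
    (h : (0 ≤ turn a b c ∧ 0 ≤ turn b c d) ∨ (turn a b c ≤ 0 ∧ turn b c d ≤ 0)) :
    ∃ w : ℝ × ℝ, b.1 ≤ w.1 ∧ w.1 ≤ c.1 ∧ turn a b w = 0 ∧ turn w c d = 0 := by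
  rcases h with ⟨h1, h2⟩ | ⟨h1, h2⟩
  · exact exists_apex_cup hab hbc hcd h1 h2
  · obtain ⟨w, hw1, hw2, hw3, hw4⟩ := exists_apex_cup (a := flipY a) (b := flipY b)
      (c := flipY c) (d := flipY d) hab hbc hcd (by simpa using h1) (by simpa using h2)
    refine ⟨flipY w, hw1, hw2, ?_, ?_⟩
    · rw [← neg_eq_zero, ← turn_flipY, flipY_flipY, hw3]
    · rw [← neg_eq_zero, ← turn_flipY, flipY_flipY, hw4]

/-! ### Noncrossing paths that touch the strip boundary only at their endpoints -/

/-- The vertex sequence `v 0, …, v m` is a noncrossing path with `m` edges from `a` to `b`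
covering `S`, all of whose inner vertices lie strictly between the vertical lines through `a`
and `b`. This strictness is what makes paths in adjacent strips concatenable. -/
structure IsStripPath (S : Set (ℝ × ℝ)) (m : ℕ) (a b : ℝ × ℝ) (v : ℕ → ℝ × ℝ) : Prop where
  pos : 0 < m
  first : v 0 = a
  last : v m = b
  lt : a.1 < b.1
  inner : ∀ i, 0 < i → i < m → a.1 < (v i).1 ∧ (v i).1 < b.1
  meet : ∀ i, i + 1 < m →
    segment ℝ (v i) (v (i + 1)) ∩ segment ℝ (v (i + 1)) (v (i + 2)) ⊆ {v (i + 1)}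
  disj : ∀ i j, i + 1 < j → j < m →
    Disjoint (segment ℝ (v i) (v (i + 1))) (segment ℝ (v j) (v (j + 1)))
  cover : ∀ p ∈ S, ∃ i < m, p ∈ segment ℝ (v i) (v (i + 1))

/-- `S` has a covering path as in `IsStripPath`. -/
def HasPath (S : Set (ℝ × ℝ)) (m : ℕ) (a b : ℝ × ℝ) : Prop := ∃ v, IsStripPath S m a b v

namespace IsStripPath

variable {S : Set (ℝ × ℝ)} {m : ℕ} {a b : ℝ × ℝ} {v : ℕ → ℝ × ℝ}

lemma vertex_lt (h : IsStripPath S m a b v) {i : ℕ} (hi : i < m) : (v i).1 < b.1 := by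
  rcases Nat.eq_zero_or_pos i with rfl | h0
  · rw [h.first]; exact h.lt
  · exact (h.inner i h0 hi).2

lemma lt_vertex (h : IsStripPath S m a b v) {i : ℕ} (h0 : 0 < i) (hi : i ≤ m) :
    a.1 < (v i).1 := by
  rcases hi.lt_or_eq with hi | rfl
  · exact (h.inner i h0 hi).1
  · rw [h.last]; exact h.lt

lemma lt_right (h : IsStripPath S m a b v) {i : ℕ} (hi : i < m) {p : ℝ × ℝ}
    (hp : p ∈ segment ℝ (v i) (v (i + 1))) : p.1 < b.1 ∨ (p = b ∧ i + 1 = m) := by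
  rw [segment_symm] at hp
  have h1 := h.vertex_lt hi
  rcases (Nat.succ_le_of_lt hi).lt_or_eq with h2 | h2
  · have h3 := h.vertex_lt h2
    rcases (isAff_fst.sub_const b.1).nonpos_of_mem hp (by simp at h3 ⊢; linarith) (by linarith)
      with h4 | ⟨h4, -⟩
    · left; linarith
    · left; rw [h4]; exact h3
  · have h2' : i + 1 = m := h2
    rw [h2', h.last] at hp
    rcases (isAff_fst.sub_const b.1).nonpos_of_mem hp (by simp) (by linarith) with h4 | ⟨h4, -⟩
    · left; linarith
    · exact Or.inr ⟨h4, h2⟩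

lemma left_lt (h : IsStripPath S m a b v) {i : ℕ} (hi : i < m) {p : ℝ × ℝ}
    (hp : p ∈ segment ℝ (v i) (v (i + 1))) : a.1 < p.1 ∨ (p = a ∧ i = 0) := by
  have h1 := h.lt_vertex (Nat.succ_pos i) hi
  have hf := (isAff_fst.sub_const a.1).mul_const (-1)
  rcases Nat.eq_zero_or_pos i with rfl | h0
  · rw [h.first] at hp
    rcases hf.nonpos_of_mem hp (by simp) (by linarith) with h4 | ⟨h4, -⟩
    · left; linarith
    · exact Or.inr ⟨h4, rfl⟩
  · have h3 := h.lt_vertex h0 hi.le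
    rcases hf.nonpos_of_mem hp (by simp; linarith) (by linarith) with h4 | ⟨h4, -⟩
    · left; linarith
    · left; rw [h4]; exact h3

/-- Concatenation of paths in adjacent strips. -/
lemma glue {T : Set (ℝ × ℝ)} {n : ℕ} {c : ℝ × ℝ} {u : ℕ → ℝ × ℝ}
    (hu : IsStripPath S m a b u) (hv : IsStripPath T n b c v) :
    IsStripPath (S ∪ T) (m + n) a c (fun i => if i ≤ m then u i else v (i - m)) := by
  set w : ℕ → ℝ × ℝ := fun i => if i ≤ m then u i else v (i - m) with hw
  have w1 : ∀ i, i ≤ m → w i = u i := fun i hi => by simp [hw, hi]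
  have w2 : ∀ i, w (m + i) = v i := fun i => by
    rcases Nat.eq_zero_or_pos i with rfl | h0
    · simp [hw, hu.last, hv.first]
    · have : ¬ (m + i ≤ m) := by omega
      simp [hw]; omega
  have w2' : ∀ i, w (m + i + 1) = v (i + 1) := fun i => w2 (i + 1)
  have split : ∀ i, i < m ∨ ∃ k, i = m + k := fun i => by
    rcases lt_or_ge i m with h | h
    · exact Or.inl h
    · exact Or.inr ⟨i - m, by omega⟩
  have cross : ∀ i k p, i < m → k < n → p ∈ segment ℝ (u i) (u (i + 1)) →
      p ∈ segment ℝ (v k) (v (k + 1)) → p = b ∧ i + 1 = m ∧ k = 0 := by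
    intro i k p hi hk h1 h2
    rcases hu.lt_right hi h1 with h | ⟨h, h'⟩ <;> rcases hv.left_lt hk h2 with g | ⟨g, g'⟩
    · linarith
    · rw [g] at h; exact absurd h (lt_irrefl _)
    · rw [h] at g; exact absurd g (lt_irrefl _)
    · exact ⟨h, h', g'⟩
  refine ⟨by have := hu.pos; omega, ?_, ?_, hu.lt.trans hv.lt, ?_, ?_, ?_, ?_⟩
  · rw [w1 0 (Nat.zero_le _), hu.first]
  · rw [w2, hv.last]
  · intro i h0 hi
    rcases split i with h | ⟨k, rfl⟩
    · rw [w1 i h.le]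
      exact ⟨hu.lt_vertex h0 h.le, (hu.vertex_lt h).trans hv.lt⟩
    · rw [w2]
      refine ⟨?_, hv.vertex_lt (by omega)⟩
      rcases Nat.eq_zero_or_pos k with rfl | hk
      · rw [hv.first]; exact hu.lt
      · exact hu.lt.trans (hv.lt_vertex hk (by omega))
  · intro i hi
    rcases split i with h | ⟨k, rfl⟩
    · rcases (Nat.succ_le_of_lt h).lt_or_eq with h2 | h2
      · rw [w1 i h.le, w1 (i + 1) h, w1 (i + 2) h2]
        exact hu.meet i h2
      · have e1 : w (i + 1) = v 0 := by rw [← w2 0, show m + 0 = i + 1 by omega]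
        have e2 : w (i + 2) = v 1 := by rw [← w2 1, show m + 1 = i + 2 by omega]
        rintro p ⟨h3, h4⟩
        rw [w1 i h.le, w1 (i + 1) h] at h3
        rw [e1, e2] at h4
        rw [e1, hv.first]
        exact (cross i 0 p h hv.pos h3 h4).1
    · have e : m + k + 2 = m + (k + 2) := by ring
      rw [w2, w2', e, w2]
      exact hv.meet k (by omega)
  · intro i j hij hj
    rcases split i with h | ⟨k, rfl⟩
    · rw [w1 i h.le, w1 (i + 1) h]
      rcases split j with h' | ⟨k', rfl⟩
      · rw [w1 j h'.le, w1 (j + 1) h']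
        exact hu.disj i j hij h'
      · rw [w2, w2', Set.disjoint_left]
        intro p h1 h2
        obtain ⟨-, h3, h4⟩ := cross i k' p h (by omega) h1 h2
        omega
    · obtain ⟨k', rfl⟩ : ∃ k', j = m + k' := ⟨j - m, by omega⟩
      rw [w2, w2', w2, w2']
      exact hv.disj k k' (by omega) (by omega)
  · rintro p (hp | hp)
    · obtain ⟨i, hi, h⟩ := hu.cover p hp
      exact ⟨i, by omega, by rwa [w1 i hi.le, w1 (i + 1) hi]⟩
    · obtain ⟨i, hi, h⟩ := hv.cover p hp
      exact ⟨m + i, by omega, by rwa [w2, w2']⟩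

end IsStripPath

lemma flipX_mem {p a b : ℝ × ℝ} (h : p ∈ segment ℝ a b) :
    flipX p ∈ segment ℝ (flipX a) (flipX b) := by
  obtain ⟨s, t, hs, ht, hst, rfl⟩ := h
  refine ⟨s, t, hs, ht, hst, ?_⟩
  ext <;> simp [flipX]; ring

lemma flipY_mem {p a b : ℝ × ℝ} (h : p ∈ segment ℝ a b) :
    flipY p ∈ segment ℝ (flipY a) (flipY b) := by
  obtain ⟨s, t, hs, ht, hst, rfl⟩ := h
  refine ⟨s, t, hs, ht, hst, ?_⟩
  ext <;> simp [flipY]; ring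

namespace HasPath

variable {S T : Set (ℝ × ℝ)} {m n : ℕ} {a b c : ℝ × ℝ}

lemma mono (h : HasPath S m a b) (hT : T ⊆ S) : HasPath T m a b := by
  obtain ⟨v, hv⟩ := h
  exact ⟨v, { hv with cover := fun p hp => hv.cover p (hT hp) }⟩

lemma glue (h : HasPath S m a b) (h' : HasPath T n b c) : HasPath (S ∪ T) (m + n) a c := by
  obtain ⟨u, hu⟩ := h
  obtain ⟨v, hv⟩ := h'
  exact ⟨_, hu.glue hv⟩

lemma edge (h : a.1 < b.1) : HasPath {a, b} 1 a b := by
  refine ⟨fun i => if i = 0 then a else b, one_pos, rfl, rfl, h, ?_, ?_, ?_, ?_⟩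
  · intros; omega
  · intros; omega
  · intros; omega
  · rintro p (rfl | rfl)
    · exact ⟨0, one_pos, left_mem_segment _ _ _⟩
    · exact ⟨0, one_pos, right_mem_segment _ _ _⟩

lemma flipY_image (h : HasPath S m a b) : HasPath (flipY '' S) m (flipY a) (flipY b) := by
  obtain ⟨v, hv⟩ := h
  refine ⟨fun i => flipY (v i), hv.pos, by simp [hv.first], by simp [hv.last], hv.lt,
    hv.inner, ?_, ?_, ?_⟩
  · rintro i hi p ⟨h1, h2⟩
    have h1 := flipY_mem h1
    have h2 := flipY_mem h2
    simp only [flipY_flipY] at h1 h2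
    have h3 : flipY p = v (i + 1) := hv.meet i hi ⟨h1, h2⟩
    simp [← h3]
  · intro i j hij hj
    rw [Set.disjoint_left]
    intro p h1 h2
    have h1 := flipY_mem h1
    have h2 := flipY_mem h2
    simp only [flipY_flipY] at h1 h2
    exact Set.disjoint_left.1 (hv.disj i j hij hj) h1 h2
  · rintro _ ⟨p, hp, rfl⟩
    obtain ⟨i, hi, h⟩ := hv.cover p hp
    exact ⟨i, hi, flipY_mem h⟩

lemma flipX_image (h : HasPath S m a b) : HasPath (flipX '' S) m (flipX b) (flipX a) := by
  obtain ⟨v, hv⟩ := h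
  refine ⟨fun i => flipX (v (m - i)), hv.pos, by simp [hv.last], by simp [hv.first],
    by simpa using hv.lt, ?_, ?_, ?_, ?_⟩
  · intro i h0 hi
    have := hv.inner (m - i) (by omega) (by omega)
    simp only [flipX_fst]
    constructor <;> linarith
  · rintro i hi p ⟨h1, h2⟩
    have h1 := flipX_mem h1
    have h2 := flipX_mem h2
    simp only [flipX_flipX] at h1 h2
    have e0 : m - i = m - (i + 2) + 2 := by omega
    have e1 : m - (i + 1) = m - (i + 2) + 1 := by omega
    rw [segment_symm, e0, e1] at h1
    rw [segment_symm, e1] at h2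
    have h3 : flipX p = v (m - (i + 2) + 1) := hv.meet (m - (i + 2)) (by omega) ⟨h2, h1⟩
    simp [e1, ← h3]
  · intro i j hij hj
    rw [Set.disjoint_left]
    intro p h1 h2
    have h1 := flipX_mem h1
    have h2 := flipX_mem h2
    simp only [flipX_flipX] at h1 h2
    have e1 : m - i = m - (i + 1) + 1 := by omega
    have e2 : m - j = m - (j + 1) + 1 := by omega
    rw [segment_symm, e1] at h1
    rw [segment_symm, e2] at h2
    exact Set.disjoint_left.1 (hv.disj (m - (j + 1)) (m - (i + 1)) (by omega) (by omega)) h2 h1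
  · rintro _ ⟨p, hp, rfl⟩
    obtain ⟨i, hi, h⟩ := hv.cover p hp
    refine ⟨m - (i + 1), by omega, ?_⟩
    have e1 : m - (m - (i + 1)) = i + 1 := by omega
    have e2 : m - (m - (i + 1) + 1) = i := by omega
    simp only [e1, e2]
    rw [segment_symm]
    exact flipX_mem h

lemma of_flipY (h : HasPath (flipY '' S) m (flipY a) (flipY b)) : HasPath S m a b := by
  have := h.flipY_image
  simpa [Set.image_image] using this

lemma of_flipX (h : HasPath (flipX '' S) m (flipX b) (flipX a)) : HasPath S m a b := by
  have := h.flipX_image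
  simpa [Set.image_image] using this

/-- A two-edge path, given by its vertices. -/
lemma of_two {v0 v1 v2 : ℝ × ℝ} (h1 : v0.1 < v1.1) (h2 : v1.1 < v2.1)
    (hc : ∀ p ∈ S, p ∈ segment ℝ v0 v1 ∨ p ∈ segment ℝ v1 v2) : HasPath S 2 v0 v2 := by
  refine ⟨fun i => [v0, v1, v2].getD i v0, by norm_num, rfl, rfl, h1.trans h2, ?_, ?_, ?_, ?_⟩
  · intro i h0 hi
    obtain rfl : i = 1 := by omega
    exact ⟨h1, h2⟩
  · intro i hi
    obtain rfl : i = 0 := by omega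
    exact meet_x h1 h2
  · intros; omega
  · intro p hp
    rcases hc p hp with h | h
    · exact ⟨0, by norm_num, h⟩
    · exact ⟨1, by norm_num, h⟩

/-- A four-edge path, given by its vertices. -/
lemma of_four {v0 v1 v2 v3 v4 : ℝ × ℝ} (h04 : v0.1 < v4.1)
    (h1 : v0.1 < v1.1 ∧ v1.1 < v4.1) (h2 : v0.1 < v2.1 ∧ v2.1 < v4.1)
    (h3 : v0.1 < v3.1 ∧ v3.1 < v4.1)
    (m0 : segment ℝ v0 v1 ∩ segment ℝ v1 v2 ⊆ {v1})
    (m1 : segment ℝ v1 v2 ∩ segment ℝ v2 v3 ⊆ {v2})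
    (m2 : segment ℝ v2 v3 ∩ segment ℝ v3 v4 ⊆ {v3})
    (d02 : Disjoint (segment ℝ v0 v1) (segment ℝ v2 v3))
    (d03 : Disjoint (segment ℝ v0 v1) (segment ℝ v3 v4))
    (d13 : Disjoint (segment ℝ v1 v2) (segment ℝ v3 v4))
    (hc : ∀ p ∈ S, p ∈ segment ℝ v0 v1 ∨ p ∈ segment ℝ v1 v2 ∨ p ∈ segment ℝ v2 v3 ∨
      p ∈ segment ℝ v3 v4) : HasPath S 4 v0 v4 := by
  refine ⟨fun i => [v0, v1, v2, v3, v4].getD i v0, by norm_num, rfl, rfl, h04, ?_, ?_, ?_, ?_⟩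
  · intro i h0 hi
    interval_cases i <;> assumption
  · intro i hi
    have hi : i < 3 := by omega
    interval_cases i <;> assumption
  · intro i j hij hj
    have hi : i < 2 := by omega
    interval_cases i <;> interval_cases j <;> first | omega | assumption
  · intro p hp
    rcases hc p hp with h | h | h | h
    · exact ⟨0, by norm_num, h⟩
    · exact ⟨1, by norm_num, h⟩
    · exact ⟨2, by norm_num, h⟩
    · exact ⟨3, by norm_num, h⟩

/-- A seven-edge path, given by its vertices. -/
lemma of_seven {v0 v1 v2 v3 v4 v5 v6 v7 : ℝ × ℝ} (h07 : v0.1 < v7.1)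
    (h1 : v0.1 < v1.1 ∧ v1.1 < v7.1) (h2 : v0.1 < v2.1 ∧ v2.1 < v7.1)
    (h3 : v0.1 < v3.1 ∧ v3.1 < v7.1) (h4 : v0.1 < v4.1 ∧ v4.1 < v7.1)
    (h5 : v0.1 < v5.1 ∧ v5.1 < v7.1) (h6 : v0.1 < v6.1 ∧ v6.1 < v7.1)
    (m0 : segment ℝ v0 v1 ∩ segment ℝ v1 v2 ⊆ {v1})
    (m1 : segment ℝ v1 v2 ∩ segment ℝ v2 v3 ⊆ {v2})
    (m2 : segment ℝ v2 v3 ∩ segment ℝ v3 v4 ⊆ {v3})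
    (m3 : segment ℝ v3 v4 ∩ segment ℝ v4 v5 ⊆ {v4})
    (m4 : segment ℝ v4 v5 ∩ segment ℝ v5 v6 ⊆ {v5})
    (m5 : segment ℝ v5 v6 ∩ segment ℝ v6 v7 ⊆ {v6})
    (d02 : Disjoint (segment ℝ v0 v1) (segment ℝ v2 v3))
    (d03 : Disjoint (segment ℝ v0 v1) (segment ℝ v3 v4))
    (d04 : Disjoint (segment ℝ v0 v1) (segment ℝ v4 v5))
    (d05 : Disjoint (segment ℝ v0 v1) (segment ℝ v5 v6))
    (d06 : Disjoint (segment ℝ v0 v1) (segment ℝ v6 v7))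
    (d13 : Disjoint (segment ℝ v1 v2) (segment ℝ v3 v4))
    (d14 : Disjoint (segment ℝ v1 v2) (segment ℝ v4 v5))
    (d15 : Disjoint (segment ℝ v1 v2) (segment ℝ v5 v6))
    (d16 : Disjoint (segment ℝ v1 v2) (segment ℝ v6 v7))
    (d24 : Disjoint (segment ℝ v2 v3) (segment ℝ v4 v5))
    (d25 : Disjoint (segment ℝ v2 v3) (segment ℝ v5 v6))
    (d26 : Disjoint (segment ℝ v2 v3) (segment ℝ v6 v7))
    (d35 : Disjoint (segment ℝ v3 v4) (segment ℝ v5 v6))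
    (d36 : Disjoint (segment ℝ v3 v4) (segment ℝ v6 v7))
    (d46 : Disjoint (segment ℝ v4 v5) (segment ℝ v6 v7))
    (hc : ∀ p ∈ S, p ∈ segment ℝ v0 v1 ∨ p ∈ segment ℝ v1 v2 ∨ p ∈ segment ℝ v2 v3 ∨
      p ∈ segment ℝ v3 v4 ∨ p ∈ segment ℝ v4 v5 ∨ p ∈ segment ℝ v5 v6 ∨
      p ∈ segment ℝ v6 v7) : HasPath S 7 v0 v7 := by
  refine ⟨fun i => [v0, v1, v2, v3, v4, v5, v6, v7].getD i v0, by norm_num, rfl, rfl, h07,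
    ?_, ?_, ?_, ?_⟩
  · intro i h0 hi
    interval_cases i <;> assumption
  · intro i hi
    have hi : i < 6 := by omega
    interval_cases i <;> assumption
  · intro i j hij hj
    have hi : i < 5 := by omega
    interval_cases i <;> interval_cases j <;> first | omega | assumption
  · intro p hp
    rcases hc p hp with h | h | h | h | h | h | h
    · exact ⟨0, by norm_num, h⟩
    · exact ⟨1, by norm_num, h⟩
    · exact ⟨2, by norm_num, h⟩
    · exact ⟨3, by norm_num, h⟩
    · exact ⟨4, by norm_num, h⟩
    · exact ⟨5, by norm_num, h⟩
    · exact ⟨6, by norm_num, h⟩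

end HasPath

/-! ### Configurations of few points that save an edge -/

section Configurations

variable {p0 p1 p2 p3 p4 p5 p6 p7 p8 : ℝ × ℝ}

/-- Four points forming a weak cup or cap are covered by two edges. -/
lemma save_four (h01 : p0.1 < p1.1) (h12 : p1.1 < p2.1) (h23 : p2.1 < p3.1)
    (h : (0 ≤ turn p0 p1 p2 ∧ 0 ≤ turn p1 p2 p3) ∨ (turn p0 p1 p2 ≤ 0 ∧ turn p1 p2 p3 ≤ 0)) :
    HasPath {p0, p1, p2, p3} 2 p0 p3 := by
  obtain ⟨w, hw1, hw2, t1, t2⟩ := exists_apex h01 h12 h23 h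
  refine HasPath.of_two (v1 := w) (by linarith) (by linarith) ?_
  rintro p (rfl | rfl | rfl | rfl)
  · exact Or.inl (left_mem_segment _ _ _)
  · exact Or.inl (mem_seg_of_turn t1 h01 hw1)
  · exact Or.inr (mem_seg_of_turn' t2 hw2 h23)
  · exact Or.inr (right_mem_segment _ _ _)

/-- The path `p0 p2 p1 p3 w p4 p5`, where `w` is the apex of the cap `p1 p3 p4 p5`. -/
lemma save_swap (h01 : p0.1 < p1.1) (h12 : p1.1 < p2.1) (h23 : p2.1 < p3.1) (h34 : p3.1 < p4.1)
    (h45 : p4.1 < p5.1) (t012 : 0 < turn p0 p1 p2) (t123 : turn p1 p2 p3 < 0)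
    (t345 : turn p3 p4 p5 < 0) (t134 : turn p1 p3 p4 ≤ 0) :
    HasPath {p0, p1, p2, p3, p4, p5} 4 p0 p5 := by
  obtain ⟨w, hw1, hw2, t1, t2⟩ := exists_apex (h12.trans h23) h34 h45 (Or.inr ⟨t134, t345.le⟩)
  have t12w : turn p1 p2 w < 0 := by
    have := turn_scale p2 t1
    by_contra! hcon
    nlinarith [mul_nonneg hcon (show 0 ≤ p3.1 - p1.1 by linarith)]
  refine HasPath.of_four (v1 := p2) (v2 := p1) (v3 := w) (by linarith)
    ⟨by linarith, by linarith⟩ ⟨by linarith, by linarith⟩ ⟨by linarith, by linarith⟩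
    ?_ ?_ ?_ ?_ ?_ ?_ ?_
  · rw [Set.inter_comm, segment_symm ℝ p2 p1, segment_symm ℝ p0 p2]
    exact meet_aff (isAff_turn p0 p2) (by unfold turn at *; linarith) (by unfold turn; ring)
      (by unfold turn; linarith)
  · rw [Set.inter_comm, segment_symm ℝ p2 p1, segment_symm ℝ p1 w, Set.inter_comm,
      segment_symm ℝ p1 p2, segment_symm ℝ w p1]
    exact meet_aff (isAff_turn p3 p1) (by unfold turn at *; linarith) (by unfold turn; ring)
      (by unfold turn at *; linarith)
  · exact meet_x (by linarith) (by linarith)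
  · rw [segment_symm]
    exact disj_touch (isAff_turn p1 p2) (by unfold turn; linarith)
      (by unfold turn at *; linarith) (by unfold turn; linarith) t12w
      (fun h => by rw [h] at h12; exact lt_irrefl _ h12)
  · exact disj_x (by linarith) (by linarith) (by linarith) (by linarith)
  · exact disj_x (by linarith) (by linarith) (by linarith) (by linarith)
  · rintro p (rfl | rfl | rfl | rfl | rfl | rfl)
    · exact Or.inl (left_mem_segment _ _ _)
    · exact Or.inr (Or.inl (right_mem_segment _ _ _))
    · exact Or.inl (right_mem_segment _ _ _)
    · exact Or.inr (Or.inr (Or.inl (mem_seg_of_turn t1 (by linarith) hw1)))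
    · exact Or.inr (Or.inr (Or.inr (mem_seg_of_turn' t2 hw2 h45)))
    · exact Or.inr (Or.inr (Or.inr (right_mem_segment _ _ _)))

/-- A steep line through `q`, which lies below the line `a b` and above the line `c d`, meets
these lines in points `w` and `z` whose abscissae are as close to that of `q` as desired. -/
lemma exists_steep {a b c d q : ℝ × ℝ} {e e' : ℝ} (hab : a.1 < b.1) (hcd : c.1 < d.1)
    (h1 : turn a b q < 0) (h2 : 0 < turn c d q) (he : q.1 < e) (he' : e' < q.1) :
    ∃ w z : ℝ × ℝ, q.1 < w.1 ∧ w.1 < e ∧ e' < z.1 ∧ z.1 < q.1 ∧ turn a b w = 0 ∧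
      turn c d z = 0 ∧ turn z q w = 0 := by
  obtain ⟨s, hs⟩ : ∃ s, b.2 - a.2 = s * (b.1 - a.1) :=
    ⟨(b.2 - a.2) / (b.1 - a.1), by rw [div_mul_cancel₀]; linarith⟩
  obtain ⟨t, ht⟩ : ∃ t, d.2 - c.2 = t * (d.1 - c.1) :=
    ⟨(d.2 - c.2) / (d.1 - c.1), by rw [div_mul_cancel₀]; linarith⟩
  -- `F` and `G` are the vertical distances from `q` to the two lines
  obtain ⟨F, hF⟩ : ∃ F, F = a.2 + s * (q.1 - a.1) - q.2 := ⟨_, rfl⟩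
  obtain ⟨G, hG⟩ : ∃ G, G = q.2 - (c.2 + t * (q.1 - c.1)) := ⟨_, rfl⟩
  have hF0 : 0 < F := by
    have : turn a b q = (b.1 - a.1) * (-F) := by
      unfold turn; rw [hF]; linear_combination (a.1 - q.1) * hs
    rw [this] at h1
    nlinarith
  have hG0 : 0 < G := by
    have : turn c d q = (d.1 - c.1) * G := by
      unfold turn; rw [hG]; linear_combination (c.1 - q.1) * ht
    rw [this] at h2
    exact pos_of_mul_pos_right h2 (by linarith)
  -- `M` is the slope of the steep line
  obtain ⟨M, hM1, hM2⟩ : ∃ M, s + F / (e - q.1) < M ∧ t + G / (q.1 - e') < M :=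
    (exists_gt (max (s + F / (e - q.1)) (t + G / (q.1 - e')))).imp fun M h => max_lt_iff.1 h
  have k1 : F / (e - q.1) < M - s := by linarith
  have k2 : G / (q.1 - e') < M - t := by linarith
  have p1 : 0 < M - s := lt_trans (div_pos hF0 (by linarith)) k1
  have p2 : 0 < M - t := lt_trans (div_pos hG0 (by linarith)) k2
  obtain ⟨δ, hδ⟩ : ∃ δ, δ = F / (M - s) := ⟨_, rfl⟩
  obtain ⟨η, hη⟩ : ∃ η, η = G / (M - t) := ⟨_, rfl⟩
  have hδ0 : 0 < δ := by rw [hδ]; exact div_pos hF0 p1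
  have hη0 : 0 < η := by rw [hη]; exact div_pos hG0 p2
  have hδ1 : δ < e - q.1 := by
    rw [hδ, div_lt_iff₀ p1]; rwa [div_lt_iff₀' (by linarith)] at k1
  have hη1 : η < q.1 - e' := by
    rw [hη, div_lt_iff₀ p2]; rwa [div_lt_iff₀' (by linarith)] at k2
  have hδ2 : F = δ * (M - s) := by rw [hδ, div_mul_cancel₀ _ p1.ne']
  have hη2 : G = η * (M - t) := by rw [hη, div_mul_cancel₀ _ p2.ne']
  refine ⟨(q.1 + δ, q.2 + M * δ), (q.1 - η, q.2 - M * η), ?_, ?_, ?_, ?_, ?_, ?_, ?_⟩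
  · simpa using hδ0
  · simp only; linarith
  · simp only; linarith
  · simpa using hη0
  · unfold turn; simp only
    linear_combination (a.1 - (q.1 + δ)) * hs + (b.1 - a.1) * (hF - hδ2)
  · unfold turn; simp only
    linear_combination (c.1 - (q.1 - η)) * ht + (d.1 - c.1) * (hη2 - hG)
  · unfold turn; simp only
    ring

/-- The path `p0 p2 w p4 z p3 p1 p5`, where `w p4 z` is a steep edge running from the line
`p0 p2` to the line `p1 p3`. -/
lemma save_steep (h01 : p0.1 < p1.1) (h12 : p1.1 < p2.1) (h23 : p2.1 < p3.1)
    (h34 : p3.1 < p4.1) (h45 : p4.1 < p5.1) (t012 : 0 < turn p0 p1 p2)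
    (t024 : turn p0 p2 p4 < 0) (t134 : 0 < turn p1 p3 p4) (t135 : turn p1 p3 p5 < 0)
    (t245 : turn p2 p4 p5 < 0) :
    HasPath {p0, p1, p2, p3, p4, p5} 4 p0 p5 := by
  obtain ⟨w, z, hw1, hw2, hz1, hz2, tw, tz, tq⟩ :=
    exists_steep (h01.trans h12) (h12.trans h23) t024 t134 h45 h34
  have t025 : turn p0 p2 p5 < 0 := by
    have e : turn p0 p2 p5 * (p4.1 - p2.1) =
        turn p0 p2 p4 * (p5.1 - p2.1) + turn p2 p4 p5 * (p2.1 - p0.1) := by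
      unfold turn; ring
    by_contra! hcon
    nlinarith [mul_nonneg hcon (show 0 ≤ p4.1 - p2.1 by linarith),
      mul_pos (neg_pos.2 t024) (show 0 < p5.1 - p2.1 by linarith),
      mul_pos (neg_pos.2 t245) (show 0 < p2.1 - p0.1 by linarith)]
  -- `p4` lies strictly between `z` and `w`, so `z` is on its side of the line `p0 p2`
  -- and `w` on its side of the line `p1 p3`
  have between : ∀ a b : ℝ × ℝ, turn a b p4 * (w.1 - z.1) =
      turn a b z * (w.1 - p4.1) + turn a b w * (p4.1 - z.1) := by
    intro a b
    unfold turn at *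
    linear_combination (a.1 - b.1) * tq
  have t02z : turn p0 p2 z < 0 := by
    have := between p0 p2
    rw [tw] at this
    by_contra! hcon
    nlinarith [mul_nonneg hcon (show 0 ≤ w.1 - p4.1 by linarith),
      mul_pos (neg_pos.2 t024) (show 0 < w.1 - z.1 by linarith)]
  have t13w : 0 < turn p1 p3 w := by
    have := between p1 p3
    rw [tz] at this
    by_contra! hcon
    nlinarith [mul_nonneg (neg_nonneg.2 hcon) (show 0 ≤ p4.1 - z.1 by linarith),
      mul_pos t134 (show 0 < w.1 - z.1 by linarith)]
  refine HasPath.of_four (v1 := w) (v2 := z) (v3 := p1) (by linarith)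
    ⟨by linarith, by linarith⟩ ⟨by linarith, by linarith⟩ ⟨by linarith, by linarith⟩
    ?_ ?_ ?_ ?_ ?_ ?_ ?_
  · rw [Set.inter_comm, segment_symm ℝ w z, segment_symm ℝ p0 w]
    exact meet_aff (isAff_turn p0 p2) t02z tw (by unfold turn; linarith)
  · exact meet_aff (isAff_turn p3 p1) (by unfold turn at *; linarith)
      (by unfold turn at *; linarith) (by unfold turn; linarith)
  · rw [Set.inter_comm, segment_symm ℝ p1 p5, segment_symm ℝ z p1]
    exact meet_aff (isAff_turn p1 p3) t135 (by unfold turn; ring) tz.ge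
  · exact disj_strict (isAff_turn p0 p2) (by unfold turn; linarith) tw.ge t02z
      (by unfold turn at *; linarith)
  · exact disj_strict (isAff_turn p0 p2) (by unfold turn; linarith) tw.ge
      (by unfold turn at *; linarith) t025
  · rw [segment_symm]
    exact disj_touch (isAff_turn p1 p3) tz.ge t13w (by unfold turn; linarith) t135
      (fun h => by rw [h] at hz1; linarith)
  · rintro p (rfl | rfl | rfl | rfl | rfl | rfl)
    · exact Or.inl (left_mem_segment _ _ _)
    · exact Or.inr (Or.inr (Or.inl (right_mem_segment _ _ _)))
    · exact Or.inl (mem_seg_of_turn tw (by linarith) (by linarith))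
    · rw [segment_symm ℝ z]
      exact Or.inr (Or.inr (Or.inl (mem_seg_of_turn tz (by linarith) (by linarith))))
    · rw [segment_symm ℝ w]
      exact Or.inr (Or.inl (mem_seg_of_turn tq (by linarith) (by linarith)))
    · exact Or.inr (Or.inr (Or.inr (right_mem_segment _ _ _)))

/-- The path `p0 p2 p1 p3 w p5 p7 p4 p6 p8`, where `w` is the apex of `p1 p3 p5 p7` and lies to
the left of `p4`. -/
lemma save_row_aux {w : ℝ × ℝ} (h01 : p0.1 < p1.1) (h12 : p1.1 < p2.1) (h23 : p2.1 < p3.1)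
    (h34 : p3.1 < p4.1) (h45 : p4.1 < p5.1) (h56 : p5.1 < p6.1) (h67 : p6.1 < p7.1)
    (h78 : p7.1 < p8.1) (t012 : turn p0 p1 p2 < 0) (t123 : 0 < turn p1 p2 p3)
    (t457 : turn p4 p5 p7 < 0) (t467 : 0 < turn p4 p6 p7) (t567 : 0 < turn p5 p6 p7)
    (t578 : turn p5 p7 p8 < 0) (t678 : turn p6 p7 p8 < 0)
    (hw1 : p3.1 ≤ w.1) (hw2 : w.1 ≤ p4.1) (t1 : turn p1 p3 w = 0) (t2 : turn w p5 p7 = 0) :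
    HasPath {p0, p1, p2, p3, p4, p5, p6, p7, p8} 7 p0 p8 := by
  have t12w : 0 < turn p1 p2 w := by
    have := turn_scale p2 t1
    by_contra! hcon
    nlinarith [mul_nonneg (neg_nonneg.2 hcon) (show 0 ≤ p3.1 - p1.1 by linarith)]
  have hw4 : w ≠ p4 := by
    rintro rfl; exact t457.ne t2
  have t57w : turn p7 p5 w = 0 := by unfold turn at *; linarith
  refine HasPath.of_seven (v1 := p2) (v2 := p1) (v3 := w) (v4 := p7) (v5 := p4) (v6 := p6)
    (by linarith) ⟨by linarith, by linarith⟩ ⟨by linarith, by linarith⟩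
    ⟨by linarith, by linarith⟩ ⟨by linarith, by linarith⟩ ⟨by linarith, by linarith⟩
    ⟨by linarith, by linarith⟩ ?_ ?_ ?_ ?_ ?_ ?_ ?_ ?_ ?_ ?_ ?_ ?_ ?_ ?_ ?_ ?_ ?_ ?_ ?_ ?_ ?_ ?_
  · rw [Set.inter_comm, segment_symm ℝ p2 p1, segment_symm ℝ p0 p2]
    exact meet_aff (isAff_turn p2 p0) (by unfold turn at *; linarith) (by unfold turn; ring)
      (by unfold turn; linarith)
  · exact meet_aff (isAff_turn p1 p3) (by unfold turn at *; linarith) (by unfold turn; ring)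
      t1.ge
  · exact meet_x (by linarith) (by linarith)
  · rw [Set.inter_comm, segment_symm ℝ p7 p4, segment_symm ℝ w p7]
    exact meet_aff (isAff_turn p5 p7) (by unfold turn at *; linarith) (by unfold turn; ring)
      (by unfold turn at *; linarith)
  · rw [Set.inter_comm, segment_symm ℝ p7 p4, segment_symm ℝ p4 p6]
    exact meet_aff (isAff_turn p4 p7) (by unfold turn at *; linarith) (by unfold turn; ring)
      (by unfold turn; linarith)
  · exact meet_x (by linarith) (by linarith)
  · rw [segment_symm]
    exact disj_touch (isAff_turn p2 p1) (by unfold turn; linarith)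
      (by unfold turn at *; linarith) (by unfold turn; linarith)
      (by unfold turn at *; linarith) (fun h => by rw [h] at h12; exact lt_irrefl _ h12)
  · exact disj_x (by linarith) (by linarith) (by linarith) (by linarith)
  · exact disj_x (by linarith) (by linarith) (by linarith) (by linarith)
  · exact disj_x (by linarith) (by linarith) (by linarith) (by linarith)
  · exact disj_x (by linarith) (by linarith) (by linarith) (by linarith)
  · exact disj_x (by linarith) (by linarith) (by linarith) (by linarith)
  · exact disj_x (by linarith) (by linarith) (by linarith) (by linarith)
  · exact disj_x (by linarith) (by linarith) (by linarith) (by linarith)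
  · exact disj_x (by linarith) (by linarith) (by linarith) (by linarith)
  · rw [segment_symm ℝ p1, segment_symm ℝ p7]
    exact (disj_touch (isAff_fst.sub_const p4.1) (by simp) (by linarith) (by linarith)
      (by linarith) hw4.symm).symm
  · rw [segment_symm ℝ p1]
    exact (disj_touch (isAff_fst.sub_const p4.1) (by simp) (by linarith) (by linarith)
      (by linarith) hw4.symm).symm
  · exact disj_x (by linarith) (by linarith) (by linarith) (by linarith)
  · exact disj_strict (isAff_turn p5 p7) (by unfold turn at *; linarith) (by unfold turn; linarith)
      (by unfold turn at *; linarith) (by unfold turn at *; linarith)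
  · exact disj_strict (isAff_turn p5 p7) (by unfold turn at *; linarith) (by unfold turn; linarith)
      (by unfold turn at *; linarith) t578
  · exact disj_touch (isAff_turn p6 p7) (by unfold turn; linarith)
      (by unfold turn at *; linarith) (by unfold turn; linarith) t678
      (fun h => by rw [h] at h67; exact lt_irrefl _ h67)
  · rintro p (rfl | rfl | rfl | rfl | rfl | rfl | rfl | rfl | rfl)
    · exact Or.inl (left_mem_segment _ _ _)
    · exact Or.inr (Or.inl (right_mem_segment _ _ _))
    · exact Or.inl (right_mem_segment _ _ _)
    · exact Or.inr (Or.inr (Or.inl (mem_seg_of_turn t1 (by linarith) hw1)))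
    · exact Or.inr (Or.inr (Or.inr (Or.inr (Or.inl (right_mem_segment _ _ _)))))
    · exact Or.inr (Or.inr (Or.inr (Or.inl
        (mem_seg_of_turn' t2 (by linarith) (by linarith)))))
    · exact Or.inr (Or.inr (Or.inr (Or.inr (Or.inr (Or.inl (right_mem_segment _ _ _))))))
    · exact Or.inr (Or.inr (Or.inr (Or.inl (right_mem_segment _ _ _))))
    · exact Or.inr (Or.inr (Or.inr (Or.inr (Or.inr (Or.inr (right_mem_segment _ _ _))))))

/-- If the upper row `p1 p3 p5 p7` of a zigzag is a weak cup or cap, an edge can be saved: the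
two cases are whether the apex is to the left or to the right of `p4`, and they are mirror
images of each other. -/
lemma save_row (h01 : p0.1 < p1.1) (h12 : p1.1 < p2.1) (h23 : p2.1 < p3.1)
    (h34 : p3.1 < p4.1) (h45 : p4.1 < p5.1) (h56 : p5.1 < p6.1) (h67 : p6.1 < p7.1)
    (h78 : p7.1 < p8.1) (t012 : turn p0 p1 p2 < 0) (t123 : 0 < turn p1 p2 p3)
    (t567 : 0 < turn p5 p6 p7) (t678 : turn p6 p7 p8 < 0)
    (t013 : turn p0 p1 p3 < 0) (t124 : 0 < turn p1 p2 p4)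
    (t134 : turn p1 p3 p4 < 0) (t457 : turn p4 p5 p7 < 0) (t467 : 0 < turn p4 p6 p7)
    (t578 : turn p5 p7 p8 < 0)
    (h : (0 ≤ turn p1 p3 p5 ∧ 0 ≤ turn p3 p5 p7) ∨ (turn p1 p3 p5 ≤ 0 ∧ turn p3 p5 p7 ≤ 0)) :
    HasPath {p0, p1, p2, p3, p4, p5, p6, p7, p8} 7 p0 p8 := by
  obtain ⟨w, hw1, hw2, t1, t2⟩ := exists_apex (h12.trans h23) (h34.trans h45) (h56.trans h67) h
  rcases le_total w.1 p4.1 with hw | hw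
  · exact save_row_aux h01 h12 h23 h34 h45 h56 h67 h78 t012 t123 t457 t467 t567 t578 t678
      hw1 hw t1 t2
  · apply HasPath.of_flipX
    refine (save_row_aux (p0 := flipX p8) (p1 := flipX p7) (p2 := flipX p6) (p3 := flipX p5)
      (p4 := flipX p4) (p5 := flipX p3) (p6 := flipX p2) (p7 := flipX p1) (p8 := flipX p0)
      (w := flipX w) ?_ ?_ ?_ ?_ ?_ ?_ ?_ ?_ ?_ ?_ ?_ ?_ ?_ ?_ ?_ ?_ ?_ ?_ ?_).mono ?_
    all_goals first
      | (simp only [flipX_fst, turn_flipX]; linarith)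
      | skip
    rintro _ ⟨p, hp, rfl⟩
    simp only [Set.mem_insert_iff, Set.mem_singleton_iff] at hp ⊢
    rcases hp with rfl | rfl | rfl | rfl | rfl | rfl | rfl | rfl | rfl <;> simp

end Configurations

/-! ### Twelve consecutive points always allow a saving -/

/-- The points `p 0, …, p 11` are sorted by abscissa and no block `p a, …, p (a + k + 1)` of
them, with its `k + 2` points, has a strip path with only `k` edges. -/
structure Stuck (p : ℕ → ℝ × ℝ) : Prop where
  lt : ∀ i j, i < j → j ≤ 11 → (p i).1 < (p j).1
  no_save : ∀ a k, a + k + 1 ≤ 11 →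
    ¬ HasPath (p '' Set.Icc a (a + k + 1)) k (p a) (p (a + k + 1))

namespace Stuck

variable {p : ℕ → ℝ × ℝ}

lemma flip (h : Stuck p) : Stuck (fun i => flipY (p i)) where
  lt := h.lt
  no_save a k hak hp := h.no_save a k hak (HasPath.of_flipY (by rwa [Set.image_image]))

lemma mirror (h : Stuck p) : Stuck (fun i => flipX (p (11 - i))) where
  lt i j hij hj := by
    have := h.lt (11 - j) (11 - i) (by omega) (by omega)
    simpa using this
  no_save a k hak hp := by
    refine h.no_save (11 - (a + k + 1)) k (by omega) (HasPath.of_flipX ?_)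
    have e : 11 - (a + k + 1) + k + 1 = 11 - a := by omega
    rw [e]
    refine hp.mono ?_
    rintro _ ⟨_, ⟨i, ⟨h1, h2⟩, rfl⟩, rfl⟩
    refine ⟨11 - i, ⟨by omega, by omega⟩, ?_⟩
    have : 11 - (11 - i) = i := by omega
    simp only [this]

/-- Consecutive turns alternate strictly, by `save_four`. -/
lemma alt (h : Stuck p) {i : ℕ} (hi : i + 3 ≤ 11) (t : 0 < turn (p i) (p (i + 1)) (p (i + 2))) :
    turn (p (i + 1)) (p (i + 2)) (p (i + 3)) < 0 := by
  by_contra! hcon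
  refine h.no_save i 2 hi ((save_four (h.lt _ _ (by omega) (by omega))
    (h.lt _ _ (by omega) (by omega)) (h.lt _ _ (by omega) (by omega))
    (Or.inl ⟨t.le, hcon⟩)).mono ?_)
  rintro _ ⟨j, ⟨h1, h2⟩, rfl⟩
  obtain ⟨d, rfl⟩ := Nat.exists_eq_add_of_le h1
  have : d < 4 := by omega
  interval_cases d <;> simp

lemma alt' (h : Stuck p) {i : ℕ} (hi : i + 3 ≤ 11)
    (t : turn (p i) (p (i + 1)) (p (i + 2)) < 0) :
    0 < turn (p (i + 1)) (p (i + 2)) (p (i + 3)) := by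
  have := h.flip.alt hi (by simpa using t)
  simpa using this

lemma turn_ne (h : Stuck p) : turn (p 0) (p 1) (p 2) ≠ 0 := by
  intro t
  have key : HasPath {p 0, p 1, p 2, p 3} 2 (p 0) (p 3) := by
    refine save_four (h.lt _ _ (by omega) (by omega)) (h.lt _ _ (by omega) (by omega))
      (h.lt _ _ (by omega) (by omega)) ?_
    rw [t]
    rcases le_total 0 (turn (p 1) (p 2) (p 3)) with h' | h'
    · exact Or.inl ⟨le_rfl, h'⟩
    · exact Or.inr ⟨le_rfl, h'⟩
  refine h.no_save 0 2 (by omega) (key.mono ?_)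
  rintro _ ⟨j, ⟨h1, h2⟩, rfl⟩
  have : j < 4 := by omega
  interval_cases j <;> simp

/-- Together with `swap'`, `mirror_swap` and `mirror_swap'` this says that in any four consecutive
points, away from the ends, each upper point lies above every line through two lower points
and vice versa. -/
lemma swap (h : Stuck p) {i : ℕ} (hi : i + 5 ≤ 11) (t : 0 < turn (p i) (p (i + 1)) (p (i + 2))) :
    0 < turn (p (i + 1)) (p (i + 3)) (p (i + 4)) := by
  by_contra! hcon
  have t1 := h.alt (i := i) (by omega) t
  have t2 := h.alt' (i := i + 1) (by omega) t1
  have t3 := h.alt (i := i + 2) (by omega) t2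
  refine h.no_save i 4 hi ((save_swap (h.lt _ _ (by omega) (by omega))
    (h.lt _ _ (by omega) (by omega)) (h.lt _ _ (by omega) (by omega))
    (h.lt _ _ (by omega) (by omega)) (h.lt _ _ (by omega) (by omega)) t t1 t3 hcon).mono ?_)
  rintro _ ⟨j, ⟨h1, h2⟩, rfl⟩
  obtain ⟨d, rfl⟩ := Nat.exists_eq_add_of_le h1
  have : d < 6 := by omega
  interval_cases d <;> simp

lemma swap' (h : Stuck p) {i : ℕ} (hi : i + 5 ≤ 11)
    (t : turn (p i) (p (i + 1)) (p (i + 2)) < 0) :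
    turn (p (i + 1)) (p (i + 3)) (p (i + 4)) < 0 := by
  have := h.flip.swap hi (by simpa using t)
  simpa using this

lemma mirror_swap (h : Stuck p) {i : ℕ} (hi : i + 5 ≤ 11)
    (t : 0 < turn (p i) (p (i + 1)) (p (i + 2))) :
    turn (p (i + 1)) (p (i + 2)) (p (i + 4)) < 0 := by
  have t3 := h.alt (i := i + 2) (by omega) (h.alt' (i := i + 1) (by omega) (h.alt (by omega) t))
  have := h.mirror.swap' (i := 6 - i) (by omega)
  simp only [turn_flipX, show 11 - (6 - i) = i + 5 by omega,
    show 11 - (6 - i + 1) = i + 4 by omega, show 11 - (6 - i + 2) = i + 3 by omega,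
    show 11 - (6 - i + 3) = i + 2 by omega, show 11 - (6 - i + 4) = i + 1 by omega] at this
  exact this t3

lemma mirror_swap' (h : Stuck p) {i : ℕ} (hi : i + 5 ≤ 11)
    (t : turn (p i) (p (i + 1)) (p (i + 2)) < 0) :
    0 < turn (p (i + 1)) (p (i + 2)) (p (i + 4)) := by
  have := h.flip.mirror_swap hi (by simpa using t)
  simpa using this

/-- Two consecutive turns within the upper row have strictly opposite signs, by `save_row`. -/
lemma row (h : Stuck p) {i : ℕ} (hi : i + 10 ≤ 11)
    (t : 0 < turn (p i) (p (i + 1)) (p (i + 2))) :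
    ¬ ((0 ≤ turn (p (i + 2)) (p (i + 4)) (p (i + 6)) ∧
        0 ≤ turn (p (i + 4)) (p (i + 6)) (p (i + 8))) ∨
      (turn (p (i + 2)) (p (i + 4)) (p (i + 6)) ≤ 0 ∧
        turn (p (i + 4)) (p (i + 6)) (p (i + 8)) ≤ 0)) := by
  intro hcon
  have t1 := h.alt (i := i) (by omega) t
  have t2 := h.alt' (i := i + 1) (by omega) t1
  have t3 := h.alt (i := i + 2) (by omega) t2
  have t4 := h.alt' (i := i + 3) (by omega) t3
  have t5 := h.alt (i := i + 4) (by omega) t4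
  have t6 := h.alt' (i := i + 5) (by omega) t5
  have t7 := h.alt (i := i + 6) (by omega) t6
  refine h.no_save (i + 1) 7 (by omega) ((save_row (h.lt _ _ (by omega) (by omega))
    (h.lt _ _ (by omega) (by omega)) (h.lt _ _ (by omega) (by omega))
    (h.lt _ _ (by omega) (by omega)) (h.lt _ _ (by omega) (by omega))
    (h.lt _ _ (by omega) (by omega)) (h.lt _ _ (by omega) (by omega))
    (h.lt _ _ (by omega) (by omega)) t1 t2 t6 t7
    (h.mirror_swap (i := i) (by omega) t) (h.mirror_swap' (i := i + 1) (by omega) t1)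
    (h.swap' (i := i + 1) (by omega) t1) (h.mirror_swap (i := i + 4) (by omega) t4)
    (h.swap (i := i + 4) (by omega) t4) (h.swap' (i := i + 5) (by omega) t5) hcon).mono ?_)
  rintro _ ⟨j, ⟨h1, h2⟩, rfl⟩
  obtain ⟨d, rfl⟩ := Nat.exists_eq_add_of_le h1
  have : d < 9 := by omega
  interval_cases d <;> simp [add_assoc]

lemma row' (h : Stuck p) {i : ℕ} (hi : i + 10 ≤ 11)
    (t : turn (p i) (p (i + 1)) (p (i + 2)) < 0) :
    ¬ ((0 ≤ turn (p (i + 2)) (p (i + 4)) (p (i + 6)) ∧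
        0 ≤ turn (p (i + 4)) (p (i + 6)) (p (i + 8))) ∨
      (turn (p (i + 2)) (p (i + 4)) (p (i + 6)) ≤ 0 ∧
        turn (p (i + 4)) (p (i + 6)) (p (i + 8)) ≤ 0)) := by
  have := h.flip.row hi (by simpa using t)
  simp only [turn_flipY, Left.nonneg_neg_iff, Left.neg_nonpos_iff] at this
  tauto

/-- The two rows cannot both turn down, by `save_steep`. -/
lemma steep (h : Stuck p) {i : ℕ} (hi : i + 6 ≤ 11)
    (t : 0 < turn (p i) (p (i + 1)) (p (i + 2)))
    (c : turn (p i) (p (i + 2)) (p (i + 4)) < 0)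
    (c' : turn (p (i + 1)) (p (i + 3)) (p (i + 5)) < 0) : False := by
  have t1 := h.alt (i := i) (by omega) t
  refine h.no_save i 4 (by omega) ((save_steep (h.lt _ _ (by omega) (by omega))
    (h.lt _ _ (by omega) (by omega)) (h.lt _ _ (by omega) (by omega))
    (h.lt _ _ (by omega) (by omega)) (h.lt _ _ (by omega) (by omega)) t c
    (h.swap (by omega) t) c' (h.swap' (i := i + 1) (by omega) t1)).mono ?_)
  rintro _ ⟨j, ⟨h1, h2⟩, rfl⟩
  obtain ⟨d, rfl⟩ := Nat.exists_eq_add_of_le h1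
  have : d < 6 := by omega
  interval_cases d <;> simp

lemma steep' (h : Stuck p) {i : ℕ} (hi : i + 6 ≤ 11)
    (t : turn (p i) (p (i + 1)) (p (i + 2)) < 0)
    (c : 0 < turn (p i) (p (i + 2)) (p (i + 4)))
    (c' : 0 < turn (p (i + 1)) (p (i + 3)) (p (i + 5))) : False :=
  h.flip.steep hi (by simpa using t) (by simpa using c) (by simpa using c')

lemma mirror_steep (h : Stuck p) {i : ℕ} (h1 : 1 ≤ i) (hi : i + 5 ≤ 11)
    (t : 0 < turn (p i) (p (i + 1)) (p (i + 2)))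
    (c : 0 < turn (p i) (p (i + 2)) (p (i + 4)))
    (c' : 0 < turn (p (i + 1)) (p (i + 3)) (p (i + 5))) : False := by
  have t3 := h.alt (i := i + 2) (by omega) (h.alt' (i := i + 1) (by omega) (h.alt (by omega) t))
  have := h.mirror.steep' (i := 6 - i) (by omega)
  simp only [turn_flipX, show 11 - (6 - i) = i + 5 by omega,
    show 11 - (6 - i + 1) = i + 4 by omega, show 11 - (6 - i + 2) = i + 3 by omega,
    show 11 - (6 - i + 3) = i + 2 by omega, show 11 - (6 - i + 4) = i + 1 by omega,
    show 11 - (6 - i + 5) = i by omega] at this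
  exact this t3 c' c

lemma mirror_steep' (h : Stuck p) {i : ℕ} (h1 : 1 ≤ i) (hi : i + 5 ≤ 11)
    (t : turn (p i) (p (i + 1)) (p (i + 2)) < 0)
    (c : turn (p i) (p (i + 2)) (p (i + 4)) < 0)
    (c' : turn (p (i + 1)) (p (i + 3)) (p (i + 5)) < 0) : False :=
  h.flip.mirror_steep h1 hi (by simpa using t) (by simpa using c) (by simpa using c')

lemma false_of_pos (h : Stuck p) (t : 0 < turn (p 0) (p 1) (p 2)) : False := by
  have t1 := h.alt (i := 0) (by omega) t
  have t2 := h.alt' (i := 1) (by omega) t1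
  have t3 := h.alt (i := 2) (by omega) t2
  have r2 := h.row (i := 0) (by omega) t
  have r3 := h.row' (i := 1) (by omega) t1
  norm_num at t1 t2 t3 r2 r3
  have s1 := h.steep (i := 2) (by omega) t2
  have s2 := h.steep' (i := 3) (by omega) t3
  have s3 := h.mirror_steep (i := 2) (by omega) (by omega) t2
  have s4 := h.mirror_steep' (i := 3) (by omega) (by omega) t3
  norm_num at s1 s2 s3 s4
  -- Write `cᵢ` for `turn (p i) (p (i + 2)) (p (i + 4))`. By `r2` the signs of `c₂` and `c₄` are
  -- strictly opposite, and `r3` makes `c₃` nonzero, so `c₃` agrees in sign with `c₂` or with `c₄`.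
  grind

end Stuck

lemma not_stuck (p : ℕ → ℝ × ℝ) : ¬ Stuck p := by
  intro h
  rcases lt_or_gt_of_ne h.turn_ne with t | t
  · exact h.flip.false_of_pos (by simpa using t)
  · exact h.false_of_pos t

/-! ### From a block to the whole point set -/

lemma HasPath.extend_right {p : ℕ → ℝ × ℝ} {N a b k : ℕ}
    (hp : ∀ i j, i < j → j ≤ N → (p i).1 < (p j).1) (d : ℕ) (hd : b + d ≤ N)
    (h : HasPath (p '' Set.Icc a b) k (p a) (p b)) :
    HasPath (p '' Set.Icc a (b + d)) (k + d) (p a) (p (b + d)) := by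
  induction d with
  | zero => exact h
  | succ d ih =>
    refine ((ih (by omega)).glue
      (HasPath.edge (hp (b + d) (b + d + 1) (by omega) (by omega)))).mono ?_
    rintro _ ⟨i, ⟨h1, h2⟩, rfl⟩
    rcases Nat.lt_or_ge i (b + d + 1) with hi | hi
    · exact Or.inl ⟨i, ⟨h1, by omega⟩, rfl⟩
    · obtain rfl : i = b + d + 1 := by omega
      simp

lemma HasPath.extend_left {p : ℕ → ℝ × ℝ} {N b k : ℕ}
    (hp : ∀ i j, i < j → j ≤ N → (p i).1 < (p j).1) (hb : b ≤ N) (a : ℕ) (hab : a ≤ b)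
    (h : HasPath (p '' Set.Icc a b) k (p a) (p b)) :
    HasPath (p '' Set.Icc 0 b) (a + k) (p 0) (p b) := by
  induction a generalizing k with
  | zero => simpa using h
  | succ a ih =>
    have := ih (k := 1 + k) (by omega) (((HasPath.edge
      (hp a (a + 1) (by omega) (by omega))).glue h).mono ?_)
    · rwa [show a + 1 + k = a + (1 + k) by omega]
    · rintro _ ⟨i, ⟨h1, h2⟩, rfl⟩
      rcases Nat.lt_or_ge a i with hi | hi
      · exact Or.inr ⟨i, ⟨hi, h2⟩, rfl⟩
      · obtain rfl : i = a := by omega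
        simp

lemma hasPath_of_sorted {p : ℕ → ℝ × ℝ} {N : ℕ} (hN : 11 ≤ N)
    (hp : ∀ i j, i < j → j ≤ N → (p i).1 < (p j).1) :
    HasPath (p '' Set.Icc 0 N) (N - 1) (p 0) (p N) := by
  by_contra hcon
  refine not_stuck p ⟨fun i j hij hj => hp i j hij (hj.trans hN), fun a k hak h => hcon ?_⟩
  have h' := h.extend_right hp (N - (a + k + 1)) (by omega)
  rw [show a + k + 1 + (N - (a + k + 1)) = N by omega] at h'
  have hfull := h'.extend_left hp le_rfl a (by omega)
  rwa [show a + (k + (N - (a + k + 1))) = N - 1 by omega] at hfull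

/-- The points of `P` enumerated by increasing abscissa. -/
lemma exists_sorted (P : Finset (ℝ × ℝ)) (hx : ∀ p ∈ P, ∀ q ∈ P, p ≠ q → p.1 ≠ q.1) :
    ∃ p : ℕ → ℝ × ℝ, (∀ i j, i < j → j < P.card → (p i).1 < (p j).1) ∧
      (∀ i < P.card, p i ∈ P) ∧ ∀ q ∈ P, ∃ i < P.card, p i = q := by
  have hinj : Set.InjOn Prod.fst (P : Set (ℝ × ℝ)) := fun a ha b hb hab => by
    by_contra hne
    exact hx a ha b hb hne hab
  have hc : (P.image Prod.fst).card = P.card := Finset.card_image_of_injOn hinj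
  set e := (P.image Prod.fst).orderEmbOfFin hc with he
  have hmem : ∀ i, ∃ q ∈ P, q.1 = e i := fun i => by
    simpa using Finset.mem_image.1 (Finset.orderEmbOfFin_mem _ hc i)
  choose f hf hf' using hmem
  refine ⟨fun i => if h : i < P.card then f ⟨i, h⟩ else 0, ?_, ?_, ?_⟩
  · intro i j hij hj
    have hi : i < P.card := hij.trans hj
    simp only [hi, hj, dif_pos, hf']
    exact e.strictMono hij
  · intro i hi
    simp only [hi, dif_pos, hf]
  · intro q hq
    have : q.1 ∈ Set.range e := by
      rw [he, Finset.range_orderEmbOfFin]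
      exact Finset.mem_coe.2 (Finset.mem_image_of_mem _ hq)
    obtain ⟨i, hi⟩ := this
    refine ⟨i, i.2, ?_⟩
    simp only [i.2, dif_pos]
    exact hinj (hf _) hq ((hf' _).trans hi)

/-- Let `P` be a set of at least `23` points in the plane, no two on a common vertical
line, with leftmost point `l` and rightmost point `r`, and let `H` be the closed
vertical strip bounded by the vertical lines through `l` and `r`. Then there is a
noncrossing covering path for `P` with `|P| - 2` edges that is contained in `H` and
whose endpoints are `l` and `r`. -/
theorem covering_path_in_strip (P : Finset (ℝ × ℝ)) (hcard : 23 ≤ P.card)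
    (hx : ∀ p ∈ P, ∀ q ∈ P, p ≠ q → p.1 ≠ q.1)
    (l r : ℝ × ℝ) (hl : l ∈ P) (hr : r ∈ P)
    (hlmin : ∀ p ∈ P, l.1 ≤ p.1) (hrmax : ∀ p ∈ P, p.1 ≤ r.1) :
    ∃ v : Fin (P.card - 2 + 1) → ℝ × ℝ,
      IsNoncrossingPath v ∧
      (∀ p ∈ P, ∃ i : Fin (P.card - 2), p ∈ pathEdge v i) ∧
      v 0 = l ∧
      v (Fin.last (P.card - 2)) = r ∧
      (∀ i : Fin (P.card - 2), pathEdge v i ⊆ {x : ℝ × ℝ | l.1 ≤ x.1 ∧ x.1 ≤ r.1}) := by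
  obtain ⟨p, hp, hpP, hP⟩ := exists_sorted P hx
  have huniq : ∀ a ∈ P, ∀ b ∈ P, a.1 = b.1 → a = b := fun a ha b hb hab => by
    by_contra hne
    exact hx a ha b hb hne hab
  have h0 : p 0 = l := by
    obtain ⟨i, hi, rfl⟩ := hP l hl
    rcases Nat.eq_zero_or_pos i with rfl | hpos
    · rfl
    · exact absurd (hlmin _ (hpP 0 (by omega))) (not_le.2 (hp 0 i hpos hi))
  have hN : p (P.card - 1) = r := by
    obtain ⟨i, hi, rfl⟩ := hP r hr
    rcases Nat.lt_or_ge i (P.card - 1) with hlt | hge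
    · exact absurd (hrmax _ (hpP (P.card - 1) (by omega))) (not_le.2 (hp i _ hlt (by omega)))
    · rw [show P.card - 1 = i by omega]
  obtain ⟨v, hv⟩ := hasPath_of_sorted (p := p) (N := P.card - 1) (by omega)
    (fun i j hij hj => hp i j hij (by omega))
  rw [h0, hN, show P.card - 1 - 1 = P.card - 2 by omega] at hv
  refine ⟨fun i => v i, ⟨?_, ?_⟩, ?_, ?_, ?_, ?_⟩
  · rintro ⟨i, hi⟩ ⟨j, hj⟩ hij
    obtain rfl : i + 1 = j := hij
    apply Set.Subset.antisymm
    · exact hv.meet i hj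
    · rintro _ rfl
      exact ⟨right_mem_segment _ _ _, left_mem_segment _ _ _⟩
  · rintro ⟨i, hi⟩ ⟨j, hj⟩ hij
    exact Set.disjoint_iff_inter_eq_empty.1 (hv.disj i j hij hj)
  · intro q hq
    obtain ⟨i, hi, rfl⟩ := hP q hq
    obtain ⟨j, hj, h⟩ := hv.cover _ ⟨i, ⟨by omega, by omega⟩, rfl⟩
    exact ⟨⟨j, hj⟩, h⟩
  · exact hv.first
  · exact hv.last
  · rintro ⟨i, hi⟩
    have hb : ∀ j ≤ P.card - 2, l.1 ≤ (v j).1 ∧ (v j).1 ≤ r.1 := by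
      intro j hj
      rcases Nat.eq_zero_or_pos j with rfl | hpos
      · rw [hv.first]; exact ⟨le_rfl, hv.lt.le⟩
      · rcases hj.lt_or_eq with hlt | rfl
        · exact ⟨(hv.inner j hpos hlt).1.le, (hv.inner j hpos hlt).2.le⟩
        · rw [hv.last]; exact ⟨hv.lt.le, le_rfl⟩
    have hconv : Convex ℝ {x : ℝ × ℝ | l.1 ≤ x.1 ∧ x.1 ≤ r.1} :=
      (convex_Icc l.1 r.1).linear_preimage (LinearMap.fst ℝ ℝ ℝ)
    exact hconv.segment_subset (hb i hi.le) (hb (i + 1) hi)
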